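/- Let p be a prime and let l, m be integers with |m| ≥ l > 0. The Baumslag–Solitar group G(l,m) = ⟨a, b; b⁻¹aˡb = aᵐ⟩ is residually a finite p-group if and only if either (i) l = 1 and m ≡ 1 (mod p), or (ii) |m| = l = p^r for some integer r ≥ 0 and, in the case m = −l, additionally p = 2. -/

import Mathlib

/-- A group `X` is *residually a finite p-group* if every non-identity element is excluded
by some normal subgroup of `p`-power index. -/
def ResiduallyPGroup (p : ℕ) (X : Type*) [Group X] : Prop :=
  ∀ x : X, x ≠ 1 → ∃ N : Subgroup X, N.Normal ∧ x ∉ N ∧ ∃ k : ℕ, N.index = p ^ k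

/-- The single relator `b⁻¹aˡb·a⁻ᵐ` of the Baumslag–Solitar group `G(l,m)`,
with `a = FreeGroup.of 0` and `b = FreeGroup.of 1`. -/
def bsRels (l m : ℤ) : Set (FreeGroup (Fin 2)) :=
  {(FreeGroup.of 1)⁻¹ * (FreeGroup.of 0) ^ l * FreeGroup.of 1 * ((FreeGroup.of 0) ^ m)⁻¹}

/-- The Baumslag–Solitar group `G(l,m) = ⟨a, b; b⁻¹aˡb = aᵐ⟩`. -/
def BS (l m : ℤ) : Type := PresentedGroup (bsRels l m)

instance (l m : ℤ) : Group (BS l m) := by delta BS; infer_instance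

namespace BSP

/-- Separate an element by a homomorphism to a finite `p`-group. -/
theorem sep_of_hom {p : ℕ} (hp : p.Prime) {X H : Type*} [Group X] [Group H] [Finite H]
    (f : X →* H) (hf : ∀ y, ∃ k : ℕ, (f y) ^ p ^ k = 1) (x : X) (hx : f x ≠ 1) :
    ∃ N : Subgroup X, N.Normal ∧ x ∉ N ∧ ∃ k : ℕ, N.index = p ^ k := by
  have : Fact p.Prime := ⟨hp⟩
  refine ⟨f.ker, inferInstance, fun h => hx h, ?_⟩
  rw [Subgroup.index_ker]
  apply IsPGroup.iff_card.1
  rintro ⟨_, y, rfl⟩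
  obtain ⟨k, hk⟩ := hf y
  exact ⟨k, Subtype.ext (by simpa using hk)⟩

theorem sep_of_hom_card {p : ℕ} (hp : p.Prime) {X H : Type*} [Group X] [Group H]
    (f : X →* H) (n : ℕ) (hn : Nat.card H = p ^ n) (x : X) (hx : f x ≠ 1) :
    ∃ N : Subgroup X, N.Normal ∧ x ∉ N ∧ ∃ k : ℕ, N.index = p ^ k := by
  have : Finite H := Nat.finite_of_card_ne_zero (by rw [hn]; exact pow_ne_zero _ hp.ne_zero)
  refine sep_of_hom hp f (fun y => ⟨n, ?_⟩) x hx
  rw [← hn]; exact pow_card_eq_one'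

/-- If `X` is residually `p`, an identity may be checked in finite `p`-quotients. -/
theorem eq_one_of_quot {p : ℕ} {X : Type*} [Group X] (hX : ResiduallyPGroup p X) (x : X)
    (h : ∀ (N : Subgroup X) [N.Normal] (n : ℕ), Nat.card (X ⧸ N) = p ^ n →
      (QuotientGroup.mk' N x) = 1) : x = 1 := by
  by_contra hx
  obtain ⟨N, hN, hxN, k, hk⟩ := hX x hx
  apply hxN
  have := h N k hk
  simpa using this

/-- The generators. -/
def ga (l m : ℤ) : BS l m := PresentedGroup.of (rels := bsRels l m) 0
def gb (l m : ℤ) : BS l m := PresentedGroup.of (rels := bsRels l m) 1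

theorem bs_rel (l m : ℤ) : (gb l m)⁻¹ * (ga l m) ^ l * gb l m = (ga l m) ^ m := by
  have := PresentedGroup.one_of_mem (rels := bsRels l m)
    (x := (FreeGroup.of 1)⁻¹ * (FreeGroup.of 0) ^ l * FreeGroup.of 1 * ((FreeGroup.of 0) ^ m)⁻¹) rfl
  simp only [map_mul, map_inv, map_zpow] at this
  exact mul_inv_eq_one.1 this

/-- universal property -/
theorem bs_lift (l m : ℤ) {H : Type*} [Group H] (x y : H) (h : y⁻¹ * x ^ l * y = x ^ m) :
    ∃ f : BS l m →* H, f (ga l m) = x ∧ f (gb l m) = y := by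
  have h' : ∀ r ∈ bsRels l m, FreeGroup.lift ![x, y] r = 1 := by
    rintro _ rfl
    simp [h]
  refine ⟨PresentedGroup.toGroup (rels := bsRels l m) (f := ![x, y]) h', ?_, ?_⟩
  · exact (PresentedGroup.toGroup.of h').trans rfl
  · exact (PresentedGroup.toGroup.of h').trans rfl

theorem bs_induction (l m : ℤ) (P : Subgroup (BS l m)) (ha : ga l m ∈ P) (hb : gb l m ∈ P) (x) :
    x ∈ P := by
  have h := PresentedGroup.closure_range_of (bsRels l m)
  have h2 : Subgroup.closure (Set.range (PresentedGroup.of (rels := bsRels l m))) ≤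
     (show Subgroup (PresentedGroup (bsRels l m)) from P) := by
    rw [Subgroup.closure_le]
    rintro _ ⟨i, rfl⟩
    fin_cases i
    · exact ha
    · exact hb
  exact h2 (h ▸ Subgroup.mem_top _)

theorem bs_hom_ext {l m : ℤ} {H : Type*} [Group H] (f g : BS l m →* H)
    (ha : f (ga l m) = g (ga l m)) (hb : f (gb l m) = g (gb l m)) : f = g := by
  ext x
  exact bs_induction l m (MonoidHom.eqLocus f g) ha hb x

/-- HNN target -/
abbrev Z := Multiplicative ℤ

def powHom (l : ℤ) : Z →* Z := zpowGroupHom l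

theorem powHom_inj {l : ℤ} (hl : l ≠ 0) : Function.Injective (powHom l) := by
  intro x y h
  have h' : l * Multiplicative.toAdd x = l * Multiplicative.toAdd y := by
    have := congrArg Multiplicative.toAdd h
    simpa [powHom] using this
  exact Multiplicative.toAdd.injective (mul_left_cancel₀ hl h')

theorem mem_powHom {l k : ℤ} (h : (Multiplicative.ofAdd k : Z) ∈ (powHom l).range) : l ∣ k := by
  obtain ⟨x, hx⟩ := h
  refine ⟨Multiplicative.toAdd x, ?_⟩
  have := congrArg Multiplicative.toAdd hx
  simpa [powHom] using this.symm

noncomputable def phi {l m : ℤ} (hl : l ≠ 0) (hm : m ≠ 0) : (powHom l).range ≃* (powHom m).range :=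
  (MonoidHom.ofInjective (powHom_inj hl)).symm.trans (MonoidHom.ofInjective (powHom_inj hm))

theorem phi_apply {l m : ℤ} (hl : l ≠ 0) (hm : m ≠ 0) (x : Z) :
    (phi hl hm ⟨powHom l x, x, rfl⟩ : Z) = powHom m x := by
  have : (⟨powHom l x, x, rfl⟩ : (powHom l).range) = MonoidHom.ofInjective (powHom_inj hl) x := rfl
  rw [this]
  simp only [phi, MulEquiv.trans_apply, MulEquiv.symm_apply_apply]
  rfl

theorem bs_to_hnn {l m : ℤ} (hl : l ≠ 0) (hm : m ≠ 0) :
    ∃ f : BS l m →* HNNExtension Z _ _ (phi hl hm),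
      f (ga l m) = HNNExtension.of (Multiplicative.ofAdd 1) ∧
      f (gb l m) = HNNExtension.t⁻¹ := by
  apply bs_lift
  have := HNNExtension.equiv_eq_conj (φ := phi hl hm) ⟨powHom l (Multiplicative.ofAdd 1), _, rfl⟩
  rw [phi_apply] at this
  simp only [powHom, zpowGroupHom_apply] at this
  rw [← map_zpow HNNExtension.of, ← map_zpow HNNExtension.of, inv_inv]
  exact this.symm

theorem ga_zpow_ne {l m : ℤ} (hl : l ≠ 0) (hm : m ≠ 0) {k : ℤ} (hk : k ≠ 0) : ga l m ^ k ≠ 1 := by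
  intro h
  obtain ⟨f, fa, -⟩ := bs_to_hnn hl hm
  have h2 := congrArg f h
  rw [map_zpow, fa, ← map_zpow, map_one f] at h2
  have h3 := HNNExtension.of_injective _ (h2.trans (map_one HNNExtension.of).symm)
  apply hk
  have := congrArg Multiplicative.toAdd h3
  simpa using this

theorem bs_not_comm {l m : ℤ} (hl : l ≠ 0) (hm : m ≠ 0) {k : ℤ} (hlk : ¬ l ∣ k) (hm1 : ¬ m ∣ 1)
    (h : Commute ((gb l m)⁻¹ * ga l m ^ k * gb l m) (ga l m)) : False := by
  obtain ⟨f, fa, fb⟩ := bs_to_hnn hl hm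
  have h2 := h.map f
  simp only [map_mul, map_inv, map_zpow, fa, fb, inv_inv] at h2
  rw [← map_zpow] at h2
  set A := (powHom l).range
  set B := (powHom m).range
  have hA : ∀ k : ℤ, ¬ l ∣ k → (Multiplicative.ofAdd k : Z) ∉ A := fun k h1 h2 => h1 (mem_powHom h2)
  have hB : (Multiplicative.ofAdd 1 : Z) ∉ B := fun h2 => hm1 (mem_powHom h2)
  let w : HNNExtension.NormalWord.ReducedWord Z A B :=
    { head := 1
      toList := [(1, Multiplicative.ofAdd k), (-1, Multiplicative.ofAdd 1),
        (1, Multiplicative.ofAdd (-k)), (-1, 1)]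
      chain := by
        simp only [List.isChain_cons_cons, HNNExtension.toSubgroup_one,
          HNNExtension.toSubgroup_neg_one]
        refine ⟨fun h => absurd h (hA _ hlk), fun h => absurd h hB,
          fun h => absurd h (hA _ (by simpa using hlk)), by simp⟩ }
  have hw := HNNExtension.ReducedWord.toList_eq_nil_of_mem_of_range (phi hl hm) w ?_
  · simp [w] at hw
  · refine ⟨Multiplicative.ofAdd 1, ?_⟩
    have e : (Multiplicative.ofAdd k : Z) = Multiplicative.ofAdd 1 ^ k := by
      rw [← ofAdd_zsmul]; simp
    simp only [HNNExtension.NormalWord.ReducedWord.prod, w, List.map_cons, List.map_nil, List.prod_cons, List.prod_nil, ofAdd_neg,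
      map_inv, map_one, e]
    have h3 := h2.eq
    rw [← mul_inv_eq_iff_eq_mul] at h3
    refine h3.symm.trans ?_
    simp [mul_assoc]

end BSP
namespace BSP

theorem bs_not_comm' {l m : ℤ} (hl : l ≠ 0) (hm : m ≠ 0) {k : ℤ} (hmk : ¬ m ∣ k) (hl1 : ¬ l ∣ 1)
    (h : Commute (gb l m * ga l m ^ k * (gb l m)⁻¹) (ga l m)) : False := by
  obtain ⟨f, fa, fb⟩ := bs_lift l m (ga m l) (gb m l)⁻¹ (by rw [← bs_rel m l]; group)
  have h2 := h.map f
  simp only [map_mul, map_inv, map_zpow, fa, fb, inv_inv] at h2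
  exact bs_not_comm hm hl hmk hl1 h2

theorem zpow_eq_one_of_coprime {Q : Type*} [Group Q] {x : Q} {s t : ℤ} (h : IsCoprime s t)
    (hs : x ^ s = 1) (ht : x ^ t = 1) : x = 1 := by
  obtain ⟨u, v, huv⟩ := h
  calc x = x ^ (u * s + v * t) := by rw [huv, zpow_one]
    _ = 1 := by rw [zpow_add, mul_comm u, mul_comm v, zpow_mul, zpow_mul, hs, ht]; simp

theorem semiconj_pow {Q : Type*} [Group Q] {b x : Q} {j : ℤ} (h : SemiconjBy b (x ^ j) x) (k : ℕ) :
    SemiconjBy (b ^ k) (x ^ (j ^ k)) x := by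
  induction k with
  | zero => simp
  | succ k ih =>
    rw [pow_succ, pow_succ']
    refine ih.mul_left ?_
    have := h.zpow_right (j ^ k)
    rwa [← zpow_mul] at this

theorem lemA {p : ℕ} (hp : p.Prime) {Q : Type*} [Group Q] {n : ℕ} (hn : Nat.card Q = p ^ n)
    {b x : Q} {j : ℤ} (h : SemiconjBy b (x ^ j) x) (hj : ¬ (p : ℤ) ∣ j - 1) : x = 1 := by
  have : Fact p.Prime := ⟨hp⟩
  have h1 := semiconj_pow h (p ^ n)
  rw [← hn, pow_card_eq_one', hn] at h1
  have h2 : x ^ (j ^ (p ^ n)) = x := by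
    have := h1.eq
    simpa using this
  have h3 : x ^ (j ^ (p ^ n) - 1) = 1 := by
    rw [zpow_sub, h2]; simp
  have h4 : x ^ ((p : ℤ) ^ n) = 1 := by
    have : x ^ (p ^ n) = 1 := by rw [← hn]; exact pow_card_eq_one'
    exact_mod_cast this
  refine zpow_eq_one_of_coprime ?_ h3 h4
  apply IsCoprime.pow_right
  rw [isCoprime_comm, (Nat.prime_iff_prime_int.1 hp).coprime_iff_not_dvd]
  intro hd
  apply hj
  rw [← ZMod.intCast_zmod_eq_zero_iff_dvd] at hd ⊢
  push_cast at hd ⊢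
  rwa [ZMod.pow_card_pow] at hd

theorem lemB {p : ℕ} (hp : p.Prime) {Q : Type*} [Group Q] {n : ℕ} (hn : Nat.card Q = p ^ n)
    {a b : Q} {r : ℕ} {l' c : ℤ} (hl' : ¬ (p : ℤ) ∣ l')
    (h : SemiconjBy b (a ^ ((p : ℤ) ^ r * c)) (a ^ ((p : ℤ) ^ r * l'))) :
    ∃ j : ℤ, SemiconjBy b ((a ^ ((p : ℤ) ^ r)) ^ j) (a ^ ((p : ℤ) ^ r)) ∧
      ((p : ℤ) ∣ c → (p : ℤ) ∣ j) := by
  have hc : IsCoprime l' ((p : ℤ) ^ n) := by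
    apply IsCoprime.pow_right
    rwa [isCoprime_comm, (Nat.prime_iff_prime_int.1 hp).coprime_iff_not_dvd]
  obtain ⟨u, v, huv⟩ := hc
  refine ⟨c * u, ?_, fun h => h.mul_right u⟩
  have h2 := h.zpow_right u
  have h4 : a ^ ((p : ℤ) ^ n) = 1 := by
    have : a ^ (p ^ n) = 1 := by rw [← hn]; exact pow_card_eq_one'
    exact_mod_cast this
  have e : a ^ ((p : ℤ) ^ r) = (a ^ ((p : ℤ) ^ r * l')) ^ u := by
    have : (p : ℤ) ^ r = (p : ℤ) ^ r * l' * u + (p : ℤ) ^ n * ((p : ℤ) ^ r * v) := by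
      linear_combination (-(p : ℤ) ^ r) * huv
    conv_lhs => rw [this, zpow_add, zpow_mul _ ((p : ℤ) ^ n), h4, one_zpow, mul_one, zpow_mul]
  rw [← zpow_mul, ← mul_assoc, zpow_mul _ _ u]
  rwa [← e] at h2

variable {p : ℕ} {X : Type*} [Group X]

theorem lemC (hp : p.Prime) (hX : ResiduallyPGroup p X) {a b : X} {r : ℕ} {l' c : ℤ}
    (ha : ∀ k : ℤ, k ≠ 0 → a ^ k ≠ 1) (hl' : ¬ (p : ℤ) ∣ l')
    (h : SemiconjBy b (a ^ ((p : ℤ) ^ r * c)) (a ^ ((p : ℤ) ^ r * l'))) : ¬ (p : ℤ) ∣ c := by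
  intro hc
  refine ha ((p : ℤ) ^ r) (pow_ne_zero _ (by exact_mod_cast hp.ne_zero)) ?_
  refine eq_one_of_quot hX _ fun N _ n hn => ?_
  have h2 := h.map (QuotientGroup.mk' N)
  simp only [map_zpow] at h2 ⊢
  obtain ⟨j, hj, hj2⟩ := lemB hp hn hl' h2
  refine lemA hp hn hj fun hd => ?_
  have h3 := (dvd_sub (hj2 hc) hd)
  simp only [sub_sub_cancel] at h3
  exact (Nat.prime_iff_prime_int.1 hp).not_isUnit (isUnit_of_dvd_one h3)

theorem lemD (hp : p.Prime) (hX : ResiduallyPGroup p X) {a b : X} {r : ℕ} {l' c : ℤ}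
    (hl' : ¬ (p : ℤ) ∣ l')
    (h : SemiconjBy b (a ^ ((p : ℤ) ^ r * c)) (a ^ ((p : ℤ) ^ r * l'))) :
    Commute (b⁻¹ * a ^ ((p : ℤ) ^ r) * b) a := by
  rw [← commutatorElement_eq_one_iff_commute]
  refine eq_one_of_quot hX _ fun N _ n hn => ?_
  have h2 := h.map (QuotientGroup.mk' N)
  rw [map_commutatorElement, commutatorElement_eq_one_iff_commute]
  simp only [map_zpow, map_mul, map_inv] at h2 ⊢
  obtain ⟨j, hj, hj2⟩ := lemB hp hn hl' h2
  rw [mul_assoc, ← hj.eq, inv_mul_cancel_left, ← zpow_mul]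
  exact (Commute.refl _).zpow_left _

theorem lemE (hp : p.Prime) (hX : ResiduallyPGroup p X) {b x : X} {j : ℤ}
    (h : SemiconjBy b (x ^ j) x) (hx : x ≠ 1) : (p : ℤ) ∣ j - 1 := by
  by_contra hj
  apply hx
  refine eq_one_of_quot hX _ fun N _ n hn => ?_
  have h2 := h.map (QuotientGroup.mk' N)
  rw [map_zpow] at h2
  exact lemA hp hn h2 hj

theorem forward (hp : p.Prime) (l m : ℤ) (hl : 0 < l) (hml : l ≤ |m|)
    (hX : ResiduallyPGroup p (BS l m)) :
      (l = 1 ∧ m ≡ 1 [ZMOD (p : ℤ)]) ∨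
      ((∃ r : ℕ, |m| = l ∧ l = (p : ℤ) ^ r) ∧ (m = -l → p = 2)) := by
  have hm0 : m ≠ 0 := by rintro rfl; simp at hml; omega
  have ha : ∀ k : ℤ, k ≠ 0 → ga l m ^ k ≠ 1 := fun k hk => ga_zpow_ne hl.ne' hm0 hk
  have hs : SemiconjBy (gb l m) (ga l m ^ m) (ga l m ^ l) := by
    rw [SemiconjBy, ← bs_rel]; group
  by_cases h1 : l = 1
  · left
    refine ⟨h1, ?_⟩
    have := lemE hp hX (b := gb l m) (x := ga l m) (j := m) (by simpa [h1] using hs)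
      (by simpa using ha 1 one_ne_zero)
    exact ((Int.modEq_iff_dvd).2 this).symm
  right
  have hpi := Nat.prime_iff_prime_int.1 hp
  have hfl := Int.finiteMultiplicity_iff.2 (⟨by simpa using hp.one_lt.ne', hl.ne'⟩ : (p : ℤ).natAbs ≠ 1 ∧ l ≠ 0)
  have hfm := Int.finiteMultiplicity_iff.2 (⟨by simpa using hp.one_lt.ne', hm0⟩ : (p : ℤ).natAbs ≠ 1 ∧ m ≠ 0)
  obtain ⟨r, l', hl1, hl2⟩ : ∃ (r : ℕ) (l' : ℤ), l = (p : ℤ) ^ r * l' ∧ ¬ (p : ℤ) ∣ l' :=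
    ⟨_, hfl.exists_eq_pow_mul_and_not_dvd⟩
  obtain ⟨s, m', hm1, hm2⟩ : ∃ (r : ℕ) (l' : ℤ), m = (p : ℤ) ^ r * l' ∧ ¬ (p : ℤ) ∣ l' :=
    ⟨_, hfm.exists_eq_pow_mul_and_not_dvd⟩
  have hrs : r = s := by
    rcases lt_trichotomy r s with h | h | h
    · exfalso
      obtain ⟨d, rfl⟩ : ∃ d, s = r + 1 + d := ⟨s - (r + 1), by omega⟩
      refine lemC hp hX (b := gb l m) (r := r) (l' := l') (c := p * (p ^ d * m')) ha hl2 ?_ (dvd_mul_right _ _)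
      have e : (p : ℤ) ^ r * (p * (p ^ d * m')) = m := by rw [hm1]; ring
      rw [← hl1, e]; exact hs
    · exact h
    · exfalso
      obtain ⟨d, rfl⟩ : ∃ d, r = s + 1 + d := ⟨r - (s + 1), by omega⟩
      refine lemC hp hX (b := (gb l m)⁻¹) (r := s) (l' := m') (c := p * (p ^ d * l')) ha hm2 ?_ (dvd_mul_right _ _)
      have e : (p : ℤ) ^ s * (p * (p ^ d * l')) = l := by rw [hl1]; ring
      rw [← hm1, e]; exact hs.inv_symm_left
  subst hrs
  have c1 : Commute ((gb l m)⁻¹ * ga l m ^ ((p : ℤ) ^ r) * gb l m) (ga l m) :=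
    lemD hp hX (l' := l') (c := m') hl2 (by rw [← hl1, ← hm1]; exact hs)
  have c2 : Commute (((gb l m)⁻¹)⁻¹ * ga l m ^ ((p : ℤ) ^ r) * (gb l m)⁻¹) (ga l m) :=
    lemD hp hX (l' := m') (c := l') hm2 (by rw [← hl1, ← hm1]; exact hs.inv_symm_left)
  rw [inv_inv] at c2
  have hl1' : ¬ l ∣ 1 := fun h => h1 (Int.eq_one_of_dvd_one hl.le h)
  have hm1' : ¬ m ∣ 1 := fun h => by
    have := Int.eq_one_of_dvd_one (abs_nonneg m) ((abs_dvd _ _).2 h)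
    omega
  have d1 : l ∣ (p : ℤ) ^ r := by
    by_contra h
    exact bs_not_comm hl.ne' hm0 h hm1' c1
  have d2 : m ∣ (p : ℤ) ^ r := by
    by_contra h
    exact bs_not_comm' hl.ne' hm0 h hl1' c2
  have hp0 : (0 : ℤ) ≤ (p : ℤ) ^ r := by positivity
  have e1 : l = (p : ℤ) ^ r := Int.dvd_antisymm hl.le hp0 d1 ⟨l', hl1⟩
  have e2 : |m| = (p : ℤ) ^ r :=
    Int.dvd_antisymm (abs_nonneg m) hp0 ((abs_dvd _ _).2 d2) ((dvd_abs _ _).2 ⟨m', hm1⟩)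
  refine ⟨⟨r, by rw [e2, e1], e1⟩, fun hneg => ?_⟩
  have h2 := lemE hp hX (b := gb l m) (x := ga l m ^ l) (j := -1)
    (by rw [← zpow_mul, mul_neg_one, ← hneg]; exact hs) (ha l hl.ne')
  have h3 : (p : ℤ) ∣ 2 := by
    rw [← dvd_neg]; simpa using h2
  have h4 : p ∣ 2 := by exact_mod_cast h3
  exact (Nat.prime_dvd_prime_iff_eq hp Nat.prime_two).1 h4

end BSP
namespace BSP

/-- In a ring with `p ^ N = 0`, unipotent elements have `p`-power order. -/
theorem unipotent_pow {p : ℕ} (hp : p.Prime) {R : Type*} [Ring R] {N : ℕ}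
    (hN : (p : R) ^ N = 0) {x : R} {K : ℕ} (hx : (x - 1) ^ K = 0) : ∃ k : ℕ, x ^ p ^ k = 1 := by
  obtain ⟨s, hs⟩ := (Commute.one_right (x - 1)).exists_add_pow_prime_pow_eq hp K
  have hK : (x - 1) ^ p ^ K = 0 := pow_eq_zero_of_le (Nat.lt_pow_self hp.one_lt).le hx
  rw [hK, sub_add_cancel, one_pow, zero_add] at hs
  refine ⟨K + N, ?_⟩
  rw [pow_add, pow_mul, hs]
  rw [mul_assoc, mul_assoc]
  generalize (x - 1) * (1 * s) = t
  have h1 := dvd_sub_pow_of_dvd_sub (R := Polynomial ℤ) (p := p)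
    (a := 1 + (p : Polynomial ℤ) * Polynomial.X) (b := 1) (by simp) N
  obtain ⟨c, hc⟩ := h1
  have h2 := congrArg (Polynomial.aeval t) hc
  simp only [map_sub, map_pow, map_add, map_one, map_mul, map_natCast, Polynomial.aeval_X,
    one_pow] at h2
  rw [pow_succ (p : R) N, hN, zero_mul, zero_mul, sub_eq_zero] at h2
  exact h2

section Magnus

variable {ι : Type*} (L : List (Σ _ : ι, Multiplicative ℤ)) (R : Type*) [CommRing R]

open Classical in
/-- nilpotent matrices attached to a word -/
noncomputable def XM (i : ι) : Matrix (Fin (L.length + 1)) (Fin (L.length + 1)) R :=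
  fun s t => if t.val = s.val + 1 ∧ ∃ h : s.val < L.length, (L[s.val]).1 = i then 1 else 0

variable {L}

theorem XM_sq (hL : L.IsChain fun l l' => Sigma.fst l ≠ Sigma.fst l') (i : ι) :
    XM L R i * XM L R i = 0 := by
  ext s t
  rw [Matrix.mul_apply]
  apply Finset.sum_eq_zero
  intro u _
  unfold XM
  split_ifs with h1 h2
  · exfalso
    obtain ⟨h1, h1', h1''⟩ := h1
    obtain ⟨h2, h2', h2''⟩ := h2
    have := List.isChain_iff_getElem.1 hL s.val (by omega)
    apply this
    rw [h1'', ← h2'']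
    simp [h1]
  all_goals simp

/-- the unit `1 + X_i` -/
noncomputable def UM (hL : L.IsChain fun l l' => Sigma.fst l ≠ Sigma.fst l') (i : ι) :
    (Matrix (Fin (L.length + 1)) (Fin (L.length + 1)) R)ˣ where
  val := 1 + XM L R i
  inv := 1 - XM L R i
  val_inv := by
    rw [mul_sub, add_mul _ _ (XM L R i), XM_sq R hL i]; simp
  inv_val := by
    rw [mul_add, sub_mul _ _ (XM L R i), XM_sq R hL i]; simp

theorem UM_zpow (hL : L.IsChain fun l l' => Sigma.fst l ≠ Sigma.fst l') (i : ι) (e : ℤ) :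
    ((UM R hL i ^ e : (Matrix (Fin (L.length + 1)) (Fin (L.length + 1)) R)ˣ) :
      Matrix (Fin (L.length + 1)) (Fin (L.length + 1)) R) = 1 + (e : R) • XM L R i := by
  have hsq := XM_sq R hL i
  induction e using Int.induction_on with
  | zero => simp
  | succ k ih =>
    rw [zpow_add_one, Units.val_mul, ih]
    simp only [UM]
    push_cast
    rw [mul_add, add_mul _ _ (XM L R i), mul_one, smul_mul_assoc, hsq, smul_zero, one_mul, add_zero, add_smul, one_smul]
    abel
  | pred k ih =>
    rw [zpow_sub_one, Units.val_mul, ih]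
    simp only [UM, Units.inv_mk]
    push_cast
    rw [mul_sub, add_mul _ _ (XM L R i), mul_one, smul_mul_assoc, hsq, smul_zero, one_mul, add_zero, sub_smul, one_smul]
    abel

/-- Magnus-type representation. -/
noncomputable def rho (hL : L.IsChain fun l l' => Sigma.fst l ≠ Sigma.fst l') :
    Monoid.CoprodI (fun _ : ι => Multiplicative ℤ) →*
      (Matrix (Fin (L.length + 1)) (Fin (L.length + 1)) R)ˣ :=
  Monoid.CoprodI.lift fun i => zpowersHom _ (UM R hL i)

theorem rho_of (hL : L.IsChain fun l l' => Sigma.fst l ≠ Sigma.fst l') (i : ι)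
    (e : Multiplicative ℤ) :
    ((rho R hL (Monoid.CoprodI.of (M := fun _ : ι => Multiplicative ℤ) (i := i) e)) :
      Matrix (Fin (L.length + 1)) (Fin (L.length + 1)) R) =
      1 + ((Multiplicative.toAdd e : ℤ) : R) • XM L R i := by
  rw [← UM_zpow R hL]
  simp [rho]

/-- unitriangular -/
def UT {n : ℕ} (M : Matrix (Fin n) (Fin n) R) : Prop :=
  (∀ i j, j < i → M i j = 0) ∧ ∀ i, M i i = 1

theorem UT.mul {n : ℕ} {M M' : Matrix (Fin n) (Fin n) R} (h : UT R M) (h' : UT R M') :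
    UT R (M * M') := by
  constructor
  · intro i j hij
    rw [Matrix.mul_apply]
    apply Finset.sum_eq_zero
    intro k _
    rcases lt_or_ge k i with hk | hk
    · rw [h.1 i k hk, zero_mul]
    · rw [h'.1 k j (hij.trans_le hk), mul_zero]
  · intro i
    rw [Matrix.mul_apply, Finset.sum_eq_single i]
    · rw [h.2, h'.2, one_mul]
    · intro k _ hk
      rcases lt_or_gt_of_ne hk with hk | hk
      · rw [h.1 i k hk, zero_mul]
      · rw [h'.1 k i hk, mul_zero]
    · simp

theorem UT.pow {n : ℕ} {M : Matrix (Fin n) (Fin n) R} (h : UT R M) : (M - 1) ^ n = 0 := by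
  have ht : M.IsUpperTriangular := fun i j hij => h.1 i j hij
  have h1 := Matrix.charpoly_of_isUpperTriangular M ht
  have h2 := Matrix.aeval_self_charpoly M
  rw [h1] at h2
  simpa [h.2] using h2

theorem UT_rho (hL : L.IsChain fun l l' => Sigma.fst l ≠ Sigma.fst l')
    (w : Monoid.CoprodI (fun _ : ι => Multiplicative ℤ)) :
    UT R ((rho R hL w) : Matrix (Fin (L.length + 1)) (Fin (L.length + 1)) R) := by
  induction w using Monoid.CoprodI.induction_on with
  | one =>
    rw [map_one, Units.val_one]
    exact ⟨fun i j h => Matrix.one_apply_ne h.ne', fun i => Matrix.one_apply_eq i⟩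
  | of i e =>
    rw [rho_of]
    constructor
    · intro s t h
      have : ¬ (t.val = s.val + 1) := by have := Fin.lt_def.1 h; omega
      simp [XM, Matrix.one_apply_ne h.ne', this]
    · intro s
      simp [XM]
  | mul x y hx hy =>
    rw [map_mul, Units.val_mul]
    exact hx.mul R hy

open Classical in
theorem prod_entry (L : List (Σ _ : ι, Multiplicative ℤ)) (k : ℕ) :
    ∀ t : ℕ, t + k = L.length →
    let P : Matrix (Fin (L.length + 1)) (Fin (L.length + 1)) R := 
      ((L.drop t).map fun x => (1 + ((Multiplicative.toAdd x.2 : ℤ) : R) • XM L R x.1)).prod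
    (∀ s : Fin (L.length + 1), s.val < t → P s (Fin.last _) = 0) ∧
    (∀ s : Fin (L.length + 1), s.val = t → P s (Fin.last _) =
      (((L.drop t).map fun x => (Multiplicative.toAdd x.2 : ℤ)).prod : ℤ)) := by
  induction k with
  | zero =>
    intro t ht
    have : L.drop t = [] := by simp; omega
    simp only [this, List.map_nil, List.prod_nil]
    constructor
    · intro s hs
      exact Matrix.one_apply_ne (by rintro rfl; simp at hs; omega)
    · intro s hs
      have : s = Fin.last _ := Fin.ext (by simp; omega)
      subst this
      simp
  | succ k ih =>
    intro t ht
    obtain ⟨ih1, ih2⟩ := ih (t + 1) (by omega)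
    have htl : t < L.length := by omega
    rw [List.drop_eq_getElem_cons htl]
    simp only [List.map_cons, List.prod_cons]
    set P : Matrix (Fin (L.length + 1)) (Fin (L.length + 1)) R := 
      ((L.drop (t + 1)).map fun x => (1 + ((Multiplicative.toAdd x.2 : ℤ) : R) • XM L R x.1)).prod
    have key : ∀ s : Fin (L.length + 1), ∀ hs : s.val < L.length, ∀ i,
        (XM L R i * P) s (Fin.last _) = if (L[s.val]).1 = i then
          P ⟨s.val + 1, by omega⟩ (Fin.last _) else 0 := by
      intro s hs i
      rw [Matrix.mul_apply, Finset.sum_eq_single ⟨s.val + 1, by omega⟩]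
      · simp [XM, hs]
      · intro u _ hu
        have : ¬ (u.val = s.val + 1) := fun h => hu (Fin.ext h)
        simp [XM, this]
      · simp
    constructor
    · intro s hs
      rw [add_mul, one_mul, smul_mul_assoc, Matrix.add_apply, Matrix.smul_apply,
        key s (by omega), ih1 s (by omega), ih1 ⟨s.val + 1, by omega⟩ (by simp; omega)]
      simp
    · intro s hs
      rw [add_mul, one_mul, smul_mul_assoc, Matrix.add_apply, Matrix.smul_apply,
        key s (by omega), ih1 s (by omega), ih2 ⟨s.val + 1, by omega⟩ (by simp; omega)]
      simp [hs]

end Magnus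

theorem coprod_resid {p : ℕ} (hp : p.Prime) (ι : Type*) :
    ResiduallyPGroup p (Monoid.CoprodI (fun _ : ι => Multiplicative ℤ)) := by
  classical
  intro x hx
  obtain ⟨w, rfl⟩ : ∃ w : Monoid.CoprodI.Word (fun _ : ι => Multiplicative ℤ), w.prod = x :=
    ⟨Monoid.CoprodI.Word.equiv x, Monoid.CoprodI.Word.equiv.symm_apply_apply x⟩
  have hw : (w.toList.map fun x => (Multiplicative.toAdd x.2 : ℤ)).prod ≠ 0 := by
    apply List.prod_ne_zero
    intro h
    obtain ⟨y, hy, hy0⟩ := List.mem_map.1 h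
    exact w.ne_one y hy (Multiplicative.toAdd.injective hy0)
  have hlen : 0 < w.toList.length := by
    rw [List.length_pos_iff]
    intro h
    apply hx
    simp [Monoid.CoprodI.Word.prod, h]
  set E := (w.toList.map fun x => (Multiplicative.toAdd x.2 : ℤ)).prod with hE
  have hpp : p ^ E.natAbs ≠ 0 := pow_ne_zero _ hp.ne_zero
  have : NeZero (p ^ E.natAbs) := ⟨hpp⟩
  have hfin : Finite (ZMod (p ^ E.natAbs)) := inferInstance
  refine sep_of_hom hp (rho (ZMod (p ^ E.natAbs)) w.chain_ne) ?_ _ ?_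
  · intro y
    obtain ⟨k, hk⟩ := unipotent_pow hp (N := E.natAbs)
      (R := Matrix (Fin (w.toList.length + 1)) (Fin (w.toList.length + 1)) (ZMod (p ^ E.natAbs)))
      (by
        have h0 : ((p ^ E.natAbs : ℕ) : ZMod (p ^ E.natAbs)) = 0 := ZMod.natCast_self _
        have := congrArg (Matrix.scalar (Fin (w.toList.length + 1))) h0
        rw [map_natCast, map_zero] at this
        exact_mod_cast this)
      ((UT_rho (ZMod (p ^ E.natAbs)) w.chain_ne y).pow)
    exact ⟨k, Units.ext (by simpa using hk)⟩
  · intro h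
    have h2 := (prod_entry (ZMod (p ^ E.natAbs)) w.toList w.toList.length 0 (by simp)).2 0 rfl
    rw [List.drop_zero] at h2
    have h3 : ((w.toList.map fun x => (1 + ((Multiplicative.toAdd x.2 : ℤ) : ZMod (p ^ E.natAbs)) • XM w.toList (ZMod (p ^ E.natAbs)) x.1)).prod) = 1 := by
      have h4 := congrArg Units.val h
      rw [Monoid.CoprodI.Word.prod, map_list_prod, Units.val_one] at h4
      refine Eq.trans ?_ h4
      rw [← Units.coeHom_apply, map_list_prod, List.map_map, List.map_map]
      congr 1
      apply List.map_congr_left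
      intro y _
      exact (rho_of (ZMod (p ^ E.natAbs)) w.chain_ne y.1 y.2).symm
    simp only [h3] at h2
    rw [Matrix.one_apply_ne (by intro h; have := congrArg Fin.val h; simp at this; omega), ← hE] at h2
    have h5 := (ZMod.intCast_zmod_eq_zero_iff_dvd _ _).1 h2.symm
    have h6 := Int.natAbs_dvd_natAbs.2 h5
    rw [Int.natAbs_natCast] at h6
    have := Nat.le_of_dvd (Int.natAbs_pos.2 hw) h6
    have := Nat.lt_pow_self (n := E.natAbs) hp.one_lt
    omega

theorem free_resid {p : ℕ} (hp : p.Prime) (ι : Type*) : ResiduallyPGroup p (FreeGroup ι) := by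
  let f : FreeGroup ι →* Monoid.CoprodI (fun _ : ι => Multiplicative ℤ) :=
    FreeGroup.lift fun i => Monoid.CoprodI.of (M := fun _ : ι => Multiplicative ℤ) (i := i) (Multiplicative.ofAdd 1)
  let g : Monoid.CoprodI (fun _ : ι => Multiplicative ℤ) →* FreeGroup ι :=
    Monoid.CoprodI.lift fun i => zpowersHom _ (FreeGroup.of i)
  have hgf : g.comp f = MonoidHom.id _ := by
    ext i
    simp [f, g]
  intro x hx
  have hfx : f x ≠ 1 := by
    intro h
    apply hx
    have := DFunLike.congr_fun hgf x
    simpa [h] using this.symm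
  obtain ⟨N, hN, hxN, k, hk⟩ := coprod_resid hp ι _ hfx
  refine sep_of_hom_card hp ((QuotientGroup.mk' N).comp f) k hk x ?_
  simpa using hxN

end BSP
namespace BSP

/-- left translation action of `C` on the free group on `C`. -/
def act (C : Type*) [Group C] : C →* MulAut (FreeGroup C) where
  toFun c := FreeGroup.freeGroupCongr (Equiv.mulLeft c)
  map_one' := by
    ext x
    induction x using FreeGroup.induction_on <;> simp_all
  map_mul' c d := by
    ext x
    induction x using FreeGroup.induction_on <;> simp_all [mul_assoc]

@[simp] theorem act_of {C : Type*} [Group C] (c d : C) : act C c (FreeGroup.of d) = FreeGroup.of (c * d) := by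
  simp [act]

theorem semidirect_resid {p : ℕ} (hp : p.Prime) (C : Type) [Group C] (n : ℕ)
    (hC : Nat.card C = p ^ n) : ResiduallyPGroup p (FreeGroup C ⋊[act C] C) := by
  have hfin : Finite C := Nat.finite_of_card_ne_zero (by rw [hC]; exact pow_ne_zero _ hp.ne_zero)
  intro x hx
  by_cases hr : x.right = 1
  · have hl : x.left ≠ 1 := fun h => hx (SemidirectProduct.ext h hr)
    obtain ⟨N, hN, hxN, k, hk⟩ := free_resid hp C _ hl
    let f : (FreeGroup C ⋊[act C] C) →* RegularWreathProduct (FreeGroup C ⧸ N) C :=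
      { toFun := fun y => ⟨fun c => QuotientGroup.mk' N (act C c⁻¹ y.left), y.right⟩
        map_one' := by
          ext <;> simp
        map_mul' := fun y z => by
          ext c
          · change (QuotientGroup.mk' N) (act C c⁻¹ (y.left * act C y.right z.left)) =
              (QuotientGroup.mk' N) (act C c⁻¹ y.left) *
                (QuotientGroup.mk' N) (act C (y.right⁻¹ * c)⁻¹ z.left)
            rw [map_mul (act C c⁻¹), map_mul, mul_inv_rev, inv_inv, map_mul (act C),
              MulAut.mul_apply]
          · simp }
    refine sep_of_hom_card hp f (k * p ^ n + n) ?_ x ?_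
    · rw [RegularWreathProduct.card, hC, ← Subgroup.index_eq_card, hk, pow_add, pow_mul]
    · intro h
      have h2 := congrFun (congrArg RegularWreathProduct.left h) 1
      apply hxN
      have h3 : act C (1 : C)⁻¹ x.left = x.left := by rw [inv_one, map_one]; rfl
      change (QuotientGroup.mk' N) (act C (1 : C)⁻¹ x.left) = 1 at h2
      rw [h3] at h2
      simpa using h2
  · exact sep_of_hom_card hp SemidirectProduct.rightHom n hC x (by simpa using hr)

theorem card_mz (n : ℕ) : Nat.card (Multiplicative (ZMod n)) = n :=
  (Nat.card_congr Multiplicative.toAdd).trans (Nat.card_zmod n)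

theorem zmod_hom {Q : Type*} [Group Q] (q : ℕ) (x : Q) (hx : x ^ q = 1) :
    ∃ f : Multiplicative (ZMod q) →* Q, f (Multiplicative.ofAdd 1) = x := by
  let g : ℤ →+ Additive Q := zmultiplesHom _ (Additive.ofMul x)
  have hg : g q = 0 := by
    simp [g, ← ofMul_pow, hx]
  refine ⟨AddMonoidHom.toMultiplicativeLeft (ZMod.lift q ⟨g, hg⟩), ?_⟩
  have : ZMod.lift q ⟨g, hg⟩ ((1 : ℤ) : ZMod q) = g 1 := ZMod.lift_coe q ⟨g, hg⟩ 1
  simp only [Int.cast_one] at this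
  simp [this, g]

theorem normal_zpowers {l m ε : ℤ} (hε : ε * ε = 1) (hm : m = l * ε) :
    (Subgroup.zpowers (ga l m ^ l)).Normal := by
  rw [← Subgroup.normalizer_eq_top_iff, Subgroup.eq_top_iff']
  have hc : SemiconjBy (gb l m) ((ga l m ^ l) ^ ε) (ga l m ^ l) := by
    rw [← zpow_mul, ← hm, SemiconjBy, ← bs_rel]; group
  apply bs_induction
  · rw [Subgroup.mem_normalizer_iff]
    intro h
    constructor
    · rintro ⟨k, rfl⟩
      refine ⟨k, ?_⟩
      simp only
      rw [← zpow_mul]; group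
    · rintro ⟨k, hk⟩
      refine ⟨k, ?_⟩
      simp only at hk ⊢
      have : h = (ga l m)⁻¹ * (ga l m * h * (ga l m)⁻¹) * ga l m := by group
      rw [this, ← hk, ← zpow_mul]; group
  · rw [Subgroup.mem_normalizer_iff]
    intro h
    constructor
    · rintro ⟨k, rfl⟩
      refine ⟨ε * k, ?_⟩
      have h2 := (hc.zpow_right (ε * k)).eq
      rw [← zpow_mul, ← mul_assoc, hε, one_mul] at h2
      simp only
      rw [h2, mul_inv_cancel_right]
    · rintro ⟨k, hk⟩
      refine ⟨ε * k, ?_⟩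
      have h2 := (hc.zpow_right k).eq
      simp only at hk ⊢
      rw [hk, ← zpow_mul] at h2
      rw [inv_mul_cancel_right] at h2
      exact mul_left_cancel h2

theorem bs_to_semi {q : ℕ} {l m ε : ℤ} (hε : ε * ε = 1) (hl : l = q) (hm : m = l * ε) :
    ∃ f : BS l m →* FreeGroup (Multiplicative (ZMod q)) ⋊[act _] Multiplicative (ZMod q),
      ∀ x, f x = 1 → x ∈ Subgroup.zpowers (ga l m ^ l) := by
  have hN := normal_zpowers hε hm
  set N := Subgroup.zpowers (ga l m ^ l) with hNdef
  have h1 : (SemidirectProduct.inr (Multiplicative.ofAdd 1) :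
      FreeGroup (Multiplicative (ZMod q)) ⋊[act _] Multiplicative (ZMod q)) ^ l = 1 := by
    rw [hl, zpow_natCast, ← map_pow, ← ofAdd_nsmul]
    simp
  obtain ⟨f, fa, fb⟩ := bs_lift l m
    (SemidirectProduct.inr (Multiplicative.ofAdd 1) :
      FreeGroup (Multiplicative (ZMod q)) ⋊[act _] Multiplicative (ZMod q))
    (SemidirectProduct.inl (FreeGroup.of 1)) (by rw [hm, zpow_mul, h1]; simp)
  refine ⟨f, ?_⟩
  have haN : (QuotientGroup.mk' N (ga l m)) ^ q = 1 := by
    rw [← map_pow, ← zpow_natCast, ← hl, ← MonoidHom.mem_ker, QuotientGroup.ker_mk']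
    exact Subgroup.mem_zpowers _
  obtain ⟨f2, hf2⟩ := zmod_hom q _ haN
  let f1 : FreeGroup (Multiplicative (ZMod q)) →* BS l m ⧸ N :=
    FreeGroup.lift fun c => f2 c * QuotientGroup.mk' N (gb l m) * (f2 c)⁻¹
  let g : FreeGroup (Multiplicative (ZMod q)) ⋊[act _] Multiplicative (ZMod q) →* BS l m ⧸ N :=
    SemidirectProduct.lift f1 f2 (by
      intro c
      ext d
      simp [f1, mul_assoc])
  have hgf : g.comp f = QuotientGroup.mk' N := by
    apply bs_hom_ext
    · simp only [MonoidHom.comp_apply, fa, g, SemidirectProduct.lift_inr, hf2]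
    · simp [MonoidHom.comp_apply, fb, g, SemidirectProduct.lift_inl, f1]
  intro x hx
  have := DFunLike.congr_fun hgf x
  rw [MonoidHom.comp_apply, hx, map_one] at this
  have := MonoidHom.mem_ker.2 this.symm
  rwa [QuotientGroup.ker_mk'] at this

theorem exists_pow_not_dvd {p : ℕ} (hp : p.Prime) {k : ℤ} (hk : k ≠ 0) :
    ¬ ((p ^ k.natAbs : ℕ) : ℤ) ∣ k := by
  intro h
  have h6 := Int.natAbs_dvd_natAbs.2 h
  rw [Int.natAbs_natCast] at h6
  have := Nat.le_of_dvd (Int.natAbs_pos.2 hk) h6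
  have := Nat.lt_pow_self (n := k.natAbs) hp.one_lt
  omega

theorem sep_pow_one {p : ℕ} (hp : p.Prime) (l k : ℤ) (hk : k ≠ 0) :
    ∃ N : Subgroup (BS l l), N.Normal ∧ ga l l ^ k ∉ N ∧ ∃ k : ℕ, N.index = p ^ k := by
  obtain ⟨f, fa, fb⟩ := bs_lift l l
    (Multiplicative.ofAdd (1 : ZMod (p ^ k.natAbs))) 1 (by simp)
  refine sep_of_hom_card hp f k.natAbs (card_mz _) _ ?_
  rw [map_zpow, fa, ← ofAdd_zsmul]
  intro h
  have h2 : ((k : ℤ) : ZMod (p ^ k.natAbs)) = 0 := by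
    simpa using h
  exact exists_pow_not_dvd hp hk ((ZMod.intCast_zmod_eq_zero_iff_dvd _ _).1 h2)

theorem sep_pow_neg (l k : ℤ) (hk : k ≠ 0) :
    ∃ N : Subgroup (BS l (-l)), N.Normal ∧ ga l (-l) ^ k ∉ N ∧ ∃ k : ℕ, N.index = 2 ^ k := by
  have hr : ∀ j : ℤ, (DihedralGroup.r (1 : ZMod (2 ^ k.natAbs))) ^ j =
      DihedralGroup.r (j : ZMod (2 ^ k.natAbs)) := fun j => by simp
  obtain ⟨f, fa, fb⟩ := bs_lift l (-l)
    (DihedralGroup.r (1 : ZMod (2 ^ k.natAbs))) (DihedralGroup.sr 0) (by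
      rw [hr, hr]; simp)
  refine sep_of_hom_card Nat.prime_two f (k.natAbs + 1)
    (by rw [DihedralGroup.nat_card, pow_succ']) _ ?_
  rw [map_zpow, fa, hr]
  intro h
  rw [DihedralGroup.one_def] at h
  have h2 : ((k : ℤ) : ZMod (2 ^ k.natAbs)) = 0 := by
    injection h
  exact exists_pow_not_dvd Nat.prime_two hk ((ZMod.intCast_zmod_eq_zero_iff_dvd _ _).1 h2)

theorem back2 {p : ℕ} (hp : p.Prime) (l m : ℤ) (r : ℕ) (hl : l = (p : ℤ) ^ r) (hm : |m| = l)
    (h2 : m = -l → p = 2) : ResiduallyPGroup p (BS l m) := by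
  have hpow : ∀ k : ℤ, k ≠ 0 →
      ∃ N : Subgroup (BS l m), N.Normal ∧ ga l m ^ k ∉ N ∧ ∃ k : ℕ, N.index = p ^ k := by
    intro k hk
    rcases eq_or_eq_neg_of_abs_eq hm with h | h
    · subst h; exact sep_pow_one hp _ k hk
    · obtain rfl := h2 h
      subst h; exact sep_pow_neg _ k hk
  obtain ⟨ε, hε, hm'⟩ : ∃ ε : ℤ, ε * ε = 1 ∧ m = l * ε := by
    rcases eq_or_eq_neg_of_abs_eq hm with h | h
    · exact ⟨1, by simp, by simp [h]⟩
    · exact ⟨-1, by simp, by simp [h]⟩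
  intro x hx
  by_cases hxN : x ∈ Subgroup.zpowers (ga l m ^ l)
  · obtain ⟨k, rfl⟩ := hxN
    simp only at hx ⊢
    rw [← zpow_mul] at hx ⊢
    exact hpow _ (by rintro h; rw [h] at hx; simp at hx)
  · obtain ⟨f, hf⟩ := bs_to_semi (q := p ^ r) hε (by exact_mod_cast hl) hm'
    obtain ⟨N, hN, hxN, k, hk⟩ := semidirect_resid hp (Multiplicative (ZMod (p ^ r))) r (card_mz _)
      (f x) (fun h => hxN (hf x h))
    refine sep_of_hom_card hp ((QuotientGroup.mk' N).comp f) k hk x ?_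
    simpa using hxN

end BSP
namespace BSP

/-- units act on the additive group -/
def unitAct (R : Type*) [CommRing R] : Rˣ →* MulAut (Multiplicative R) where
  toFun v := AddEquiv.toMultiplicative (DistribMulAction.toAddEquiv R v)
  map_one' := by ext x; simp
  map_mul' v w := by ext x; simp [mul_smul]

theorem unitAct_apply {R : Type*} [CommRing R] (v : Rˣ) (x : R) :
    unitAct R v (Multiplicative.ofAdd x) = Multiplicative.ofAdd ((v : R) * x) := rfl

theorem aff_hom {R : Type*} [CommRing R] (m : ℤ) (u : Rˣ) (hu : (u : R) = m) :
    ∃ f : BS 1 m →* Multiplicative R ⋊[(unitAct R).comp (Subgroup.zpowers u).subtype]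
      (Subgroup.zpowers u), ∀ k : ℤ, f (ga 1 m ^ k) =
        SemidirectProduct.inl (Multiplicative.ofAdd (k : R)) := by
  let w : Subgroup.zpowers u := ⟨u, Subgroup.mem_zpowers u⟩
  obtain ⟨f, fa, fb⟩ := bs_lift 1 m
    (SemidirectProduct.inl (Multiplicative.ofAdd 1) :
      Multiplicative R ⋊[(unitAct R).comp (Subgroup.zpowers u).subtype] (Subgroup.zpowers u))
    (SemidirectProduct.inr w⁻¹) (by
      rw [zpow_one, ← map_inv, inv_inv, ← SemidirectProduct.inl_aut, ← map_zpow, ← ofAdd_zsmul]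
      congr 1
      change unitAct R u (Multiplicative.ofAdd 1) = _
      rw [unitAct_apply, hu]
      simp)
  refine ⟨f, fun k => ?_⟩
  rw [map_zpow, fa, ← map_zpow, ← ofAdd_zsmul]
  simp

theorem sep_aff {p : ℕ} (hp : p.Prime) (m : ℤ) (hm : (p : ℤ) ∣ m - 1) (k : ℤ) (hk : k ≠ 0) :
    ∃ N : Subgroup (BS 1 m), N.Normal ∧ ga 1 m ^ k ∉ N ∧ ∃ k : ℕ, N.index = p ^ k := by
  set n := k.natAbs with hn
  have hm1 : ((m : ZMod (p ^ n))) ^ (p ^ n) = 1 := by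
    have h := dvd_sub_pow_of_dvd_sub (p := p) (a := m) (b := 1) hm n
    have h2 : ((p ^ n : ℕ) : ℤ) ∣ m ^ p ^ n - 1 ^ p ^ n :=
      dvd_trans (by push_cast; exact pow_dvd_pow _ (Nat.le_succ n)) h
    have h3 := (ZMod.intCast_zmod_eq_zero_iff_dvd _ _).2 h2
    push_cast at h3
    simpa [sub_eq_zero] using h3
  let u : (ZMod (p ^ n))ˣ := Units.ofPowEqOne (m : ZMod (p ^ n)) (p ^ n) hm1 (pow_ne_zero _ hp.ne_zero)
  have hu : u ^ (p ^ n) = 1 := Units.pow_ofPowEqOne _ _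
  obtain ⟨j, -, hj⟩ := (Nat.dvd_prime_pow hp).1 (orderOf_dvd_of_pow_eq_one hu)
  obtain ⟨f, hf⟩ := aff_hom m u rfl
  refine sep_of_hom_card hp f (n + j) ?_ _ ?_
  · rw [SemidirectProduct.card, Nat.card_zpowers, hj, pow_add, card_mz]
  · rw [hf]
    intro h
    have h1 := SemidirectProduct.inl_injective (h.trans (map_one SemidirectProduct.inl).symm)
    have h2 : ((k : ℤ) : ZMod (p ^ n)) = 0 := Multiplicative.ofAdd.injective h1
    exact exists_pow_not_dvd hp hk ((ZMod.intCast_zmod_eq_zero_iff_dvd _ _).1 h2)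

theorem sep_b {p : ℕ} (hp : p.Prime) (m : ℤ) (k : ℤ) (hk : k ≠ 0) (x : BS 1 m)
    (hx : ∀ (f : BS 1 m →* Multiplicative ℤ), f (ga 1 m) = 1 → 
      f (gb 1 m) = Multiplicative.ofAdd 1 → f x = Multiplicative.ofAdd k) :
    ∃ N : Subgroup (BS 1 m), N.Normal ∧ x ∉ N ∧ ∃ k : ℕ, N.index = p ^ k := by
  obtain ⟨f, fa, fb⟩ := bs_lift 1 m
    (1 : Multiplicative ℤ) (Multiplicative.ofAdd 1) (by simp)
  refine sep_of_hom_card hp ((AddMonoidHom.toMultiplicative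
    (Int.castAddHom (ZMod (p ^ k.natAbs)))).comp f) k.natAbs (card_mz _) _ ?_
  rw [MonoidHom.comp_apply, hx f fa fb]
  intro h
  have h2 : ((k : ℤ) : ZMod (p ^ k.natAbs)) = 0 := by
    simpa using h
  exact exists_pow_not_dvd hp hk ((ZMod.intCast_zmod_eq_zero_iff_dvd _ _).1 h2)

theorem bs_one_conj (m : ℤ) (k : ℤ) : ga 1 m ^ k * gb 1 m = gb 1 m * ga 1 m ^ (m * k) := by
  have h : SemiconjBy (gb 1 m) (ga 1 m ^ m) (ga 1 m) := by
    rw [SemiconjBy, ← bs_rel]; group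
  have := (h.zpow_right k).eq
  rw [← zpow_mul] at this
  exact this.symm

theorem bs_one_conj_pow (m : ℤ) (k : ℤ) (j : ℕ) :
    ga 1 m ^ k * gb 1 m ^ j = gb 1 m ^ j * ga 1 m ^ (m ^ j * k) := by
  induction j with
  | zero => simp
  | succ j ih =>
    rw [pow_succ, ← mul_assoc, ih, mul_assoc, bs_one_conj, mul_assoc]
    congr 3; ring

/-- normal form `b^i a^k b^{-j}` -/
theorem bs_one_form (m : ℤ) (x : BS 1 m) :
    ∃ (i j : ℕ) (k : ℤ), x = gb 1 m ^ i * ga 1 m ^ k * (gb 1 m ^ j)⁻¹ := by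
  let P : Subgroup (BS 1 m) :=
    { carrier := {x | ∃ (i j : ℕ) (k : ℤ), x = gb 1 m ^ i * ga 1 m ^ k * (gb 1 m ^ j)⁻¹}
      one_mem' := ⟨0, 0, 0, by simp⟩
      inv_mem' := by
        rintro _ ⟨i, j, k, rfl⟩
        exact ⟨j, i, -k, by simp [mul_assoc]⟩
      mul_mem' := by
        rintro _ _ ⟨i, j, k, rfl⟩ ⟨i', j', k', rfl⟩
        rcases le_total j i' with h | h
        · obtain ⟨d, rfl⟩ := Nat.exists_eq_add_of_le h
          refine ⟨i + d, j', m ^ d * k + k', ?_⟩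
          have := bs_one_conj_pow m k d
          calc _ = gb 1 m ^ i * (ga 1 m ^ k * gb 1 m ^ d) * ga 1 m ^ k' * (gb 1 m ^ j')⁻¹ := by
                rw [pow_add]; group
            _ = _ := by rw [this, pow_add, zpow_add]; group
        · obtain ⟨d, rfl⟩ := Nat.exists_eq_add_of_le h
          refine ⟨i, d + j', k + m ^ d * k', ?_⟩
          have := bs_one_conj_pow m k' d
          rw [← mul_inv_eq_iff_eq_mul] at this
          calc _ = gb 1 m ^ i * ga 1 m ^ k * ((gb 1 m ^ d)⁻¹ * (ga 1 m ^ k')) * (gb 1 m ^ j')⁻¹ := by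
                rw [pow_add]; group
            _ = _ := by rw [← this, pow_add, zpow_add]; group }
  exact bs_induction 1 m P ⟨0, 0, 1, by simp⟩ ⟨1, 0, 0, by simp⟩ x

theorem back1 {p : ℕ} (hp : p.Prime) (m : ℤ) (hm : (p : ℤ) ∣ m - 1) :
    ResiduallyPGroup p (BS 1 m) := by
  intro x hx
  obtain ⟨i, j, k, rfl⟩ := bs_one_form m x
  by_cases hij : i = j
  · subst hij
    have hk : k ≠ 0 := by
      rintro rfl
      simp at hx
    obtain ⟨N, hN, hxN, h⟩ := sep_aff hp m hm k hk
    refine ⟨N, hN, fun h2 => hxN ?_, h⟩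
    have := hN.conj_mem _ h2 (gb 1 m ^ i)⁻¹
    convert this using 1
    group
  · refine sep_b hp m ((i : ℤ) - j) (by omega) _ ?_
    intro f fa fb
    simp only [map_mul, map_pow, map_zpow, map_inv, fa, fb]
    apply Multiplicative.toAdd.injective
    simp [sub_eq_add_neg]

end BSP

/-- **Theorem 3.** For `|m| ≥ l > 0`, the Baumslag–Solitar group
`G(l,m) = ⟨a, b; b⁻¹aˡb = aᵐ⟩` is residually a finite `p`-group iff either `l = 1` and
`m ≡ 1 (mod p)`, or `|m| = l = p^r` for some `r ≥ 0` and moreover `p = 2` whenever `m = -l`. -/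
theorem bs_residually_p_iff (p : ℕ) (hp : p.Prime) (l m : ℤ) (hl : 0 < l) (hml : l ≤ |m|) :
    ResiduallyPGroup p (BS l m) ↔
      (l = 1 ∧ m ≡ 1 [ZMOD (p : ℤ)]) ∨
      ((∃ r : ℕ, |m| = l ∧ l = (p : ℤ) ^ r) ∧ (m = -l → p = 2)) := by
  refine ⟨BSP.forward hp l m hl hml, ?_⟩
  rintro (⟨rfl, h⟩ | ⟨⟨r, hm, hr⟩, h2⟩)
  · exact BSP.back1 hp m (Int.modEq_iff_dvd.1 h.symm)
  · exact BSP.back2 hp l m r hr hm h2
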